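/- For every d with 1 ≤ d ≤ 5, every Mani d-polytope is combinatorially equivalent to the d-dimensional crosspolytope conv{±e₁, …, ±e_d}; in particular there is exactly one combinatorial type of Mani d-polytope for 1 ≤ d ≤ 5. -/

import Mathlib

open scoped RealInnerProductSpace

noncomputable section

/-- We work in `ℝ^d`, modelled as Euclidean space. -/
abbrev Euc (d : ℕ) := EuclideanSpace ℝ (Fin d)

/-- `P` is a polytope: the convex hull of a finite set of points. -/
def IsPolytope {d : ℕ} (P : Set (Euc d)) : Prop :=
  ∃ V : Set (Euc d), V.Finite ∧ P = convexHull ℝ V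

/-- `P` is a `d`-polytope in `ℝ^d`: a polytope whose affine span is all of `ℝ^d`. -/
def IsDPolytope {d : ℕ} (P : Set (Euc d)) : Prop :=
  IsPolytope P ∧ affineSpan ℝ P = ⊤

/-- The vertices of a polytope are its extreme points. -/
def verts {d : ℕ} (P : Set (Euc d)) : Set (Euc d) :=
  Set.extremePoints ℝ P

/-- `[u,v]` is an inner diagonal of `P`: `u`, `v` are distinct vertices and the
relative interior of the segment (the open segment) meets the interior of `P`. -/
def InnerDiagonal {d : ℕ} (P : Set (Euc d)) (u v : Euc d) : Prop :=
  u ∈ verts P ∧ v ∈ verts P ∧ u ≠ v ∧ (openSegment ℝ u v ∩ interior P).Nonempty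

/-- `P` is illuminated: every vertex lies on an inner diagonal. -/
def Illuminated {d : ℕ} (P : Set (Euc d)) : Prop :=
  ∀ v ∈ verts P, ∃ u, InnerDiagonal P u v

/-- A set `U` of vertices illuminates itself if every `v ∈ U` lies on an inner
diagonal `[u,v]` with `u ∈ U`. -/
def IlluminatesItself {d : ℕ} (P : Set (Euc d)) (U : Set (Euc d)) : Prop :=
  ∀ v ∈ U, ∃ u ∈ U, InnerDiagonal P u v

/-- A set `W` of vertices lies opposite the vertex `v ∉ W` if `[v,w]` is an inner
diagonal for all `w ∈ W`, and the remaining vertices illuminate themselves. -/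
def LiesOpposite {d : ℕ} (P : Set (Euc d)) (W : Set (Euc d)) (v : Euc d) : Prop :=
  v ∈ verts P ∧ W ⊆ verts P ∧ v ∉ W ∧ (∀ w ∈ W, InnerDiagonal P v w) ∧
    IlluminatesItself P (verts P \ (W ∪ {v}))

/-- `Γ(P)`: the maximum cardinality of a set lying opposite some vertex (`0` if none). -/
def Gamma {d : ℕ} (P : Set (Euc d)) : ℕ :=
  sSup {n : ℕ | ∃ W v, LiesOpposite P W v ∧ W.ncard = n}

/-- `p(d) = ⌈(√(4d+1) - 1)/2⌉`. -/
def pf (d : ℕ) : ℕ := ⌈(Real.sqrt (4 * d + 1) - 1) / 2⌉₊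

/-- `M(d) = min {2d, d + p(d) + ⌈d/p(d)⌉ + 1}`. -/
def Mf (d : ℕ) : ℕ := min (2 * d) (d + pf d + ⌈(d : ℝ) / (pf d : ℝ)⌉₊ + 1)

/-- A Mani `d`-polytope: an illuminated `d`-polytope with exactly `M(d)` vertices. -/
def IsManiPolytope {d : ℕ} (P : Set (Euc d)) : Prop :=
  IsDPolytope P ∧ Illuminated P ∧ (verts P).ncard = Mf d

/-- A facet of a `d`-polytope: an exposed face of dimension `d - 1`. -/
def IsFacetOf {d : ℕ} (P F : Set (Euc d)) : Prop :=
  IsExposed ℝ P F ∧ Module.finrank ℝ (affineSpan ℝ F).direction = d - 1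

/-- `S` is the vertex set of an (exposed) face of `P`. -/
def IsFaceVertexSet {d : ℕ} (P S : Set (Euc d)) : Prop :=
  ∃ F : Set (Euc d), IsExposed ℝ P F ∧ S = verts P ∩ F

/-- Combinatorial equivalence: a bijection of the vertex sets carrying vertex sets
of faces to vertex sets of faces in both directions. -/
def CombEquiv {d : ℕ} (P Q : Set (Euc d)) : Prop :=
  ∃ f : Euc d → Euc d, Set.BijOn f (verts P) (verts Q) ∧
    ∀ S ⊆ verts P, (IsFaceVertexSet P S ↔ IsFaceVertexSet Q (f '' S))

/-- The `d`-dimensional crosspolytope `conv {±e₁, …, ±e_d}`. -/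
def crossPolytope (d : ℕ) : Set (Euc d) :=
  convexHull ℝ
    {x | ∃ i : Fin d, x = EuclideanSpace.single i 1 ∨ x = -EuclideanSpace.single i 1}

/-- `{u, v}` is the vertex set of an edge (a `1`-dimensional exposed face) of `P`. -/
def IsEdgeVertexSet {d : ℕ} (P : Set (Euc d)) (u v : Euc d) : Prop :=
  ∃ F : Set (Euc d), IsExposed ℝ P F ∧
    Module.finrank ℝ (affineSpan ℝ F).direction = 1 ∧ Set.extremePoints ℝ F = {u, v}

/-!
Move an interior point of the polytope to the origin. The extreme points of the polar body then
correspond to the facets, and since no facet contains both ends of an inner diagonal, the facets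
are independent sets of the graph of inner diagonals. Each has at least `d` vertices, and for
vertices `i ≠ j` some facet contains `i` but not `j`.

Illumination says that this graph has no isolated vertex, so it has a spanning star forest, with
`k` stars, say. Comparing how the facets meet the stars shows that, if some star has more than one
leaf and there are at most `2d` vertices, then `k (k - 1) ≤ d (k - 2)`, which is impossible for
`d ≤ 5`. So the inner diagonals contain a perfect matching, with exactly `d` edges.

Each facet therefore contains exactly one end of each of these `d` diagonals, and walking along an
edge of the polar body exchanges one end for the other. So all `2 ^ d` choices of ends are facets,
and the vertex sets of proper faces are the sets containing no complete diagonal, as in the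
crosspolytope.
-/

section StarForest

variable {V : Type*} {G : SimpleGraph V} {c : V → V}

/-- A spanning star forest of `G` without trivial stars, encoded by the map `c` that sends every
vertex to the centre of its star. -/
structure IsStarForest (G : SimpleGraph V) (c : V → V) : Prop where
  idem : ∀ x, c (c x) = c x
  adj : ∀ x, c x ≠ x → G.Adj x (c x)
  exists_leaf : ∀ x, c x = x → ∃ y ≠ x, c y = x

theorem exists_le_forall_edge_subsingleton_neighborSet [Finite V]
    (hG : ∀ v, ∃ u, G.Adj v u) :
    ∃ H ≤ G, (∀ v, ∃ u, H.Adj v u) ∧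
      ∀ u v, H.Adj u v → (H.neighborSet u).Subsingleton ∨ (H.neighborSet v).Subsingleton := by
  obtain ⟨H, hHG, ⟨-, hH⟩, hmin⟩ :=
    exists_minimal_le_of_wellFoundedLT (fun H => H ≤ G ∧ ∀ v, ∃ u, H.Adj v u) G ⟨le_rfl, hG⟩
  refine ⟨H, hHG, hH, fun u v huv => ?_⟩
  by_contra! ⟨hu, hv⟩
  have hdel : ∀ x, ∃ y, (H.deleteEdges {s(u, v)}).Adj x y := by
    intro x
    simp only [SimpleGraph.deleteEdges_adj, Set.mem_singleton_iff]
    obtain ⟨y, hy⟩ := hH x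
    rcases eq_or_ne x u with rfl | hxu
    · obtain ⟨z, hz, hzv⟩ := hu.exists_ne v
      exact ⟨z, hz, by grind⟩
    rcases eq_or_ne x v with rfl | hxv
    · obtain ⟨z, hz, hzu⟩ := hv.exists_ne u
      exact ⟨z, hz, by grind⟩
    · exact ⟨y, hy, by grind⟩
  have hle : H ≤ H.deleteEdges {s(u, v)} :=
    hmin ⟨(H.deleteEdges_le _).trans hHG, hdel⟩ (H.deleteEdges_le _)
  simpa using hle huv

theorem exists_isStarForest [Finite V] (hG : ∀ v, ∃ u, G.Adj v u) : ∃ c, IsStarForest G c := by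
  classical
  obtain ⟨H, hHG, hH, hpendant⟩ := exists_le_forall_edge_subsingleton_neighborSet hG
  choose f hf using hH
  let : LinearOrder V := linearOrderOfSTO WellOrderingRel
  have hff : ∀ x, (H.neighborSet (f x)).Subsingleton → f (f x) = x := fun x h =>
    h (hf (f x)) (hf x).symm
  -- The order only serves to choose a centre in the components with a single edge.
  refine ⟨fun x => if (H.neighborSet x).Subsingleton ∧
    (¬ (H.neighborSet (f x)).Subsingleton ∨ f x < x) then f x else x, ?_, ?_, ?_⟩
  · grind
  · intro x hx
    have := hHG (hf x)
    grind
  · intro x hx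
    have := hpendant _ _ (hf x)
    have := (hf x).ne'
    exact ⟨f x, by grind⟩

end StarForest

section StarCounting

open scoped Finset

variable {V : Type*} [Fintype V] [DecidableEq V] {G : SimpleGraph V} {c : V → V} {F : Finset V}
  {v : V}

/-- The set of centres of the star forest encoded by `c`. -/
def centers (c : V → V) : Finset V := {v | c v = v}

/-- The leaves of the star with centre `v` in the star forest encoded by `c`. -/
def leaves (c : V → V) (v : V) : Finset V := {x | c x = v ∧ x ≠ v}

theorem mem_centers : v ∈ centers c ↔ c v = v := by simp [centers]

theorem mem_leaves {x : V} : x ∈ leaves c v ↔ c x = v ∧ x ≠ v := by simp [leaves]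

theorem star_inter_subset_leaves (hvF : v ∉ F) : {x ∈ F | c x = v} ⊆ leaves c v := by
  grind [mem_leaves]

namespace IsStarForest

theorem apply_mem_centers (h : IsStarForest G c) (x : V) : c x ∈ centers c :=
  mem_centers.2 (h.idem x)

theorem adj_of_mem_leaves (h : IsStarForest G c) {x : V} (hx : x ∈ leaves c v) : G.Adj x v := by
  obtain ⟨rfl, hne⟩ := mem_leaves.1 hx
  exact h.adj x hne.symm

theorem leaves_nonempty (h : IsStarForest G c) (hv : v ∈ centers c) :
    (leaves c v).Nonempty :=
  let ⟨y, hne, hy⟩ := h.exists_leaf v (mem_centers.1 hv)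
  ⟨y, mem_leaves.2 ⟨hy, hne⟩⟩

theorem card_eq_sum_card_star (h : IsStarForest G c) (F : Finset V) :
    #F = ∑ v ∈ centers c, #{x ∈ F | c x = v} :=
  Finset.card_eq_sum_card_fiberwise fun x _ => h.apply_mem_centers x

theorem card_eq_sum_card_leaves (h : IsStarForest G c) :
    Fintype.card V = ∑ v ∈ centers c, (#(leaves c v) + 1) := by
  rw [← Finset.card_univ, h.card_eq_sum_card_star]
  refine Finset.sum_congr rfl fun v hv => ?_
  rw [← Finset.card_insert_of_notMem (s := leaves c v) (a := v) (by simp [mem_leaves])]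
  congr 1
  ext x
  have := mem_centers.1 hv
  grind [mem_leaves]

theorem card_star_inter_eq_one (h : IsStarForest G c) (hF : G.IsIndepSet F)
    (hv : v ∈ centers c) (hvF : v ∈ F) : #{x ∈ F | c x = v} = 1 := by
  refine Finset.card_eq_one.2 ⟨v, Finset.eq_singleton_iff_unique_mem.2
    ⟨by simp [hvF, mem_centers.1 hv], fun x hx => ?_⟩⟩
  obtain ⟨hxF, hx⟩ := Finset.mem_filter.1 hx
  by_contra hne
  exact hF hxF hvF hne (h.adj_of_mem_leaves (mem_leaves.2 ⟨hx, hne⟩))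

theorem card_star_inter_le (h : IsStarForest G c) (hF : G.IsIndepSet F) (hv : v ∈ centers c) :
    #{x ∈ F | c x = v} ≤ #(leaves c v) := by
  by_cases hvF : v ∈ F
  · exact (h.card_star_inter_eq_one hF hv hvF).trans_le (h.leaves_nonempty hv).card_pos
  · exact Finset.card_le_card (star_inter_subset_leaves hvF)

theorem card_star_inter_lt (h : IsStarForest G c) (hF : G.IsIndepSet F) (hv : v ∈ centers c)
    (h2 : 2 ≤ #(leaves c v)) {w : V} (hw : w ∈ leaves c v) (hwF : w ∉ F) :
    #{x ∈ F | c x = v} < #(leaves c v) := by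
  by_cases hvF : v ∈ F
  · exact (h.card_star_inter_eq_one hF hv hvF).trans_lt h2
  · refine Finset.card_lt_card ((star_inter_subset_leaves hvF).ssubset_of_mem_notMem hw ?_)
    simp [hwF]

theorem card_le_card_centers (h : IsStarForest G c) (hF : G.IsIndepSet F) (hv : v ∈ centers c)
    (hvF : v ∈ F) (h1 : ∀ v' ∈ centers c, v' ≠ v → #(leaves c v') = 1) :
    #F ≤ #(centers c) := by
  rw [h.card_eq_sum_card_star, Finset.card_eq_sum_ones]
  refine Finset.sum_le_sum fun v' hv' => ?_
  rcases eq_or_ne v' v with rfl | hne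
  · exact (h.card_star_inter_eq_one hF hv hvF).le
  · exact (h.card_star_inter_le hF hv').trans_eq (h1 v' hv' hne)

theorem card_add_card_centers_add_card_leaves_le (h : IsStarForest G c) (hF : G.IsIndepSet F)
    (hv : v ∈ centers c) (hvF : v ∈ F) {v' w : V} (hv' : v' ∈ centers c) (hne : v' ≠ v)
    (h2 : 2 ≤ #(leaves c v')) (hw : w ∈ leaves c v') (hwF : w ∉ F) :
    #F + #(centers c) + #(leaves c v) ≤ Fintype.card V := by
  have hlt : ∑ x ∈ (centers c).erase v, #{y ∈ F | c y = x} <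
      ∑ x ∈ (centers c).erase v, #(leaves c x) :=
    Finset.sum_lt_sum (fun x hx => h.card_star_inter_le hF (Finset.mem_of_mem_erase hx))
      ⟨v', Finset.mem_erase.2 ⟨hne, hv'⟩, h.card_star_inter_lt hF hv' h2 hw hwF⟩
  have hF_sum := h.card_eq_sum_card_star F
  have hV_sum := h.card_eq_sum_card_leaves
  rw [Finset.sum_add_distrib, ← Finset.card_eq_sum_ones] at hV_sum
  rw [← Finset.add_sum_erase _ _ hv] at hF_sum hV_sum
  have := h.card_star_inter_eq_one hF hv hvF
  lia

section Separating

variable {𝓕 : Set (Finset V)} {d : ℕ}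

theorem add_card_centers_add_card_leaves_le (h : IsStarForest G c)
    (hcard : ∀ F ∈ 𝓕, d ≤ #F) (hsep : ∀ i j, i ≠ j → ∃ F ∈ 𝓕, i ∈ F ∧ j ∉ F)
    (hindep : ∀ F ∈ 𝓕, G.IsIndepSet (F : Set V)) (hv : v ∈ centers c)
    {v' : V} (hv' : v' ∈ centers c) (hne : v' ≠ v) (h2 : 2 ≤ #(leaves c v')) :
    d + #(centers c) + #(leaves c v) ≤ Fintype.card V := by
  obtain ⟨w, hw⟩ := h.leaves_nonempty hv'
  have hvw : v ≠ w := by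
    rintro rfl
    exact hne ((mem_leaves.1 hw).1.symm.trans (mem_centers.1 hv))
  obtain ⟨F, hF, hvF, hwF⟩ := hsep v w hvw
  have := h.card_add_card_centers_add_card_leaves_le (hindep F hF) hv hvF hv' hne h2 hw hwF
  have := hcard F hF
  lia

theorem card_leaves_eq_one (h : IsStarForest G c)
    (hcard : ∀ F ∈ 𝓕, d ≤ #F) (hsep : ∀ i j, i ≠ j → ∃ F ∈ 𝓕, i ∈ F ∧ j ∉ F)
    (hindep : ∀ F ∈ 𝓕, G.IsIndepSet (F : Set V)) (hd : d ≤ 5) (hV : Fintype.card V ≤ 2 * d)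
    (hv : v ∈ centers c) : #(leaves c v) = 1 := by
  by_contra hv1
  have hbig : 2 ≤ #(leaves c v) := by have := (h.leaves_nonempty hv).card_pos; lia
  have hV_sum := h.card_eq_sum_card_leaves
  rw [Finset.sum_add_distrib, ← Finset.card_eq_sum_ones] at hV_sum
  have key : ∀ x ∈ centers c, d + #(centers c) + #(leaves c x) ≤ Fintype.card V := by
    intro x hx
    by_cases hother : ∃ y ∈ centers c, y ≠ x ∧ 2 ≤ #(leaves c y)
    · obtain ⟨y, hy, hne, h2⟩ := hother
      exact h.add_card_centers_add_card_leaves_le hcard hsep hindep hx hy hne h2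
    · exfalso
      have h1 : ∀ y ∈ centers c, y ≠ x → #(leaves c y) = 1 := fun y hy hne => by
        by_contra hy1
        exact hother ⟨y, hy, hne, by have := (h.leaves_nonempty hy).card_pos; lia⟩
      obtain rfl : v = x := by by_contra hne; exact hv1 (h1 v hv hne)
      obtain ⟨w, hw⟩ := h.leaves_nonempty hv
      obtain ⟨F, hF, hvF, -⟩ := hsep v w (mem_leaves.1 hw).2.symm
      have hdk := (hcard F hF).trans (h.card_le_card_centers (hindep F hF) hv hvF h1)
      have : #(centers c) < ∑ x ∈ centers c, #(leaves c x) := by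
        rw [Finset.card_eq_sum_ones]
        exact Finset.sum_lt_sum (fun x hx => (h.leaves_nonempty hx).card_pos) ⟨v, hv, hbig⟩
      lia
  have hsum := Finset.sum_le_sum key
  simp only [Finset.sum_add_distrib, Finset.sum_const, smul_eq_mul] at hsum
  have hk : 0 < #(centers c) := Finset.card_pos.2 ⟨v, hv⟩
  have : #(leaves c v) ≤ ∑ x ∈ centers c, #(leaves c x) :=
    Finset.single_le_sum (f := fun x => #(leaves c x)) (fun _ _ => Nat.zero_le _) hv
  -- Summing `key` gives `k (k - 1) ≤ d (k - 2)` for `k = #(centers c)`; if `d ≤ 5`, this forces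
  -- `(k - 3) ^ 2 + 1 ≤ 0`.
  zify at *
  nlinarith [sq_nonneg ((#(centers c) : ℤ) - 3)]

end Separating

theorem exists_equiv_prod_bool (h : IsStarForest G c)
    (h1 : ∀ v ∈ centers c, #(leaves c v) = 1) :
    ∃ u : centers c × Bool ≃ V, ∀ v, G.Adj (u (v, true)) (u (v, false)) := by
  choose leaf hleaf using fun v : centers c => h.leaves_nonempty v.2
  let u : centers c × Bool → V := fun p => if p.2 then p.1 else leaf p.1
  have hcu : ∀ p, c (u p) = p.1 := by
    rintro ⟨v, _ | _⟩
    · exact (mem_leaves.1 (hleaf v)).1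
    · exact mem_centers.1 v.2
  have hinj : Function.Injective u := by
    rintro ⟨v, b⟩ ⟨v', b'⟩ huv
    obtain rfl : v = v' := Subtype.ext ((hcu (v, b)).symm.trans ((congrArg c huv).trans (hcu _)))
    have := (mem_leaves.1 (hleaf v)).2
    grind
  have hcard : Fintype.card (centers c × Bool) = Fintype.card V := by
    rw [h.card_eq_sum_card_leaves, Finset.sum_congr rfl fun v hv => by rw [h1 v hv]]
    simp
  exact ⟨.ofBijective u ((Fintype.bijective_iff_injective_and_card u).2 ⟨hinj, hcard⟩),
    fun v => (h.adj_of_mem_leaves (hleaf v)).symm⟩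

end IsStarForest

end StarCounting

section Matching

open scoped Finset

theorem exists_equiv_fin_prod_bool {V : Type*} [Fintype V] [Nonempty V] {G : SimpleGraph V}
    {𝓕 : Set (Finset V)} {d : ℕ}
    (hG : ∀ v, ∃ u, G.Adj v u) (hcard : ∀ F ∈ 𝓕, d ≤ #F)
    (hsep : ∀ i j, i ≠ j → ∃ F ∈ 𝓕, i ∈ F ∧ j ∉ F)
    (hindep : ∀ F ∈ 𝓕, G.IsIndepSet (F : Set V)) (hd : d ≤ 5) (hV : Fintype.card V ≤ 2 * d) :
    ∃ u : Fin d × Bool ≃ V, ∀ i, G.Adj (u (i, true)) (u (i, false)) := by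
  classical
  obtain ⟨c, h⟩ := exists_isStarForest hG
  have h1 : ∀ v ∈ centers c, #(leaves c v) = 1 := fun v hv =>
    h.card_leaves_eq_one hcard hsep hindep hd hV hv
  obtain ⟨u, hu⟩ := h.exists_equiv_prod_bool h1
  have hV_card : #(centers c) * 2 = Fintype.card V := by simpa using Fintype.card_congr u
  have hd_le : d ≤ #(centers c) := by
    obtain ⟨v⟩ := ‹Nonempty V›
    obtain ⟨v', hv'⟩ := hG v
    obtain ⟨F, hF, -⟩ := hsep v v' hv'.ne
    rw [Finset.card_eq_sum_ones, ← Finset.sum_congr rfl h1]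
    exact (hcard F hF).trans ((h.card_eq_sum_card_star F).trans_le
      (Finset.sum_le_sum fun v hv => h.card_star_inter_le (hindep F hF) hv))
  let e : Fin d ≃ centers c := (Fintype.equivFinOfCardEq (by simp; lia)).symm
  exact ⟨(e.prodCongr (.refl Bool)).trans u, fun i => hu (e i)⟩

end Matching

section PolarBody

open Filter Topology Pointwise

variable {E : Type*} [NormedAddCommGroup E] [NormedSpace ℝ E] {ι : Type*} {w : ι → E}
  {f m : StrongDual ℝ E}

/-- The one-sided polar body of a family of points: the functionals bounded by `1` on the family.
It lives in the dual space, so no identification of `E` with its dual is needed. -/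
def polarBody (w : ι → E) : Set (StrongDual ℝ E) :=
  {f | ∀ i, f (w i) ≤ 1}

/-- The face of the polar body of `w` on which the inequalities indexed by `S` are tight. -/
def polarFace (w : ι → E) (S : Set ι) : Set (StrongDual ℝ E) :=
  {f ∈ polarBody w | ∀ i ∈ S, f (w i) = 1}

theorem isClosed_polarBody (w : ι → E) : IsClosed (polarBody w) := by
  rw [polarBody, Set.ofPred_forall]
  exact isClosed_iInter fun i => isClosed_le (by fun_prop) continuous_const

theorem forall_mem_convexHull_range_le_iff {a : ℝ} :
    (∀ x ∈ convexHull ℝ (Set.range w), f x ≤ a) ↔ ∀ i, f (w i) ≤ a := by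
  change convexHull ℝ (Set.range w) ⊆ {x | f x ≤ a} ↔ _
  exact (convex_halfSpace_le f.toLinearMap.isLinear a).convexHull_subset_iff.trans
    Set.range_subset_iff

theorem eq_zero_of_mem_interior {C : Set E} {x : E} (hx : x ∈ interior C)
    (hmax : ∀ y ∈ C, f y ≤ f x) : f = 0 := by
  have hlocal : IsLocalMax f x := mem_of_superset (mem_interior_iff_mem_nhds.1 hx) hmax
  exact f.fderiv ▸ hlocal.fderiv_eq_zero

theorem zero_mem_interior_convexHull_range_sub {z : E}
    (hz : z ∈ interior (convexHull ℝ (Set.range w))) :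
    0 ∈ interior (convexHull ℝ (Set.range fun i => w i - z)) := by
  have hrange : (Set.range fun i => w i - z) = -z +ᵥ Set.range w := by
    simp only [← Set.range_vadd, vadd_eq_add, neg_add_eq_sub]
  rw [hrange, convexHull_vadd, interior_vadd]
  exact Set.mem_vadd_set.2 ⟨z, hz, by simp⟩

theorem exists_forall_apply_lt [Finite ι] (hw : ConvexIndependent ℝ w) (i : ι) :
    ∃ l : StrongDual ℝ E, ∀ k ≠ i, l (w k) < l (w i) := by
  obtain ⟨l, a, hlt, hi⟩ := geometric_hahn_banach_closed_point (convex_convexHull ℝ _)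
    (((Set.toFinite {i}ᶜ).image w).isClosed_convexHull ℝ) fun h => (hw {i}ᶜ i h) rfl
  exact ⟨l, fun k hk => (hlt _ (subset_convexHull ℝ _ ⟨k, hk, rfl⟩)).trans hi⟩

theorem isBounded_polarBody (h0 : 0 ∈ interior (convexHull ℝ (Set.range w))) :
    Bornology.IsBounded (polarBody w) := by
  have hnhds := mem_interior_iff_mem_nhds.1 h0
  refine (NormedSpace.isBounded_polar_of_mem_nhds_zero ℝ
    (inter_mem hnhds (neg_mem_nhds_zero E hnhds))).subset fun f hf => ?_
  rw [StrongDual.mem_polar_iff]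
  have hle := forall_mem_convexHull_range_le_iff.2 hf
  exact fun x hx => abs_le'.2 ⟨hle x hx.1, by simpa using hle (-x) hx.2⟩

theorem isExtreme_polarFace (w : ι → E) (S : Set ι) :
    IsExtreme ℝ (polarBody w) (polarFace w S) := by
  refine ⟨fun f hf => hf.1, fun f hf g hg _ hfg ⟨a, b, ha, hb, hab, hsum⟩ => ⟨hf, fun i hi => ?_⟩⟩
  have heq : a * f (w i) + b * g (w i) = 1 := by rw [← hfg.2 i hi, ← hsum]; simp
  have := hf i
  have := hg i
  nlinarith

theorem exists_mem_extremePoints_polarBody_forall_le (hw : IsCompact (polarBody w)) {S : Set ι}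
    (hS : (polarFace w S).Nonempty) (x : E) :
    ∃ f ∈ (polarBody w).extremePoints ℝ, f ∈ polarFace w S ∧ ∀ g ∈ polarFace w S, f x ≤ g x := by
  have hclosed : IsClosed (polarFace w S) := by
    have heq : polarFace w S = polarBody w ∩ ⋂ i ∈ S, {f | f (w i) = 1} := by
      ext; simp [polarFace]
    exact heq ▸ (isClosed_polarBody w).inter
      (isClosed_biInter fun i _ => isClosed_eq (by fun_prop) continuous_const)
  have hcompact : IsCompact (polarFace w S) := hw.of_isClosed_subset hclosed fun f hf => hf.1
  let evalNeg : StrongDual ℝ (StrongDual ℝ E) := -ContinuousLinearMap.apply ℝ ℝ x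
  have hexposed : IsExposed ℝ (polarFace w S) (evalNeg.toExposed (polarFace w S)) :=
    ContinuousLinearMap.toExposed.isExposed
  obtain ⟨g, hg, hgmin⟩ := hcompact.exists_isMinOn hS (f := fun f => f x) (by fun_prop)
  obtain ⟨f, hf⟩ := (hexposed.isCompact hcompact).extremePoints_nonempty
    ⟨g, hg, fun g' hg' => neg_le_neg (hgmin hg')⟩
  exact ⟨f, ((isExtreme_polarFace w S).trans hexposed.isExtreme).extremePoints_subset_extremePoints
    hf, hf.1.1, fun g' hg' => neg_le_neg_iff.1 (hf.1.2 g' hg')⟩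

theorem eventually_add_smul_mem_polarBody [Finite ι] (hf : f ∈ polarBody w)
    (hm : ∀ i, f (w i) = 1 → m (w i) ≤ 0) : ∀ᶠ t in 𝓝[>] (0 : ℝ), f + t • m ∈ polarBody w := by
  refine eventually_all.2 fun i => ?_
  rcases (hf i).lt_or_eq with hlt | heq
  · have hcont : Tendsto (fun t : ℝ => f (w i) + t * m (w i)) (𝓝[>] 0) (𝓝 (f (w i))) :=
      tendsto_nhdsWithin_of_tendsto_nhds (Continuous.tendsto' (by fun_prop) _ _ (by simp))
    filter_upwards [hcont.eventually_lt_const hlt] with t ht using by simpa using ht.le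
  · filter_upwards [self_mem_nhdsWithin] with t ht
    simpa [heq] using mul_nonpos_of_nonneg_of_nonpos (le_of_lt ht) (hm i heq)

theorem eq_zero_of_mem_extremePoints_polarBody [Finite ι]
    (hf : f ∈ (polarBody w).extremePoints ℝ) (hm : ∀ i, f (w i) = 1 → m (w i) = 0) : m = 0 := by
  obtain ⟨t, ⟨hpos, hneg⟩, ht⟩ :=
    ((eventually_add_smul_mem_polarBody hf.1 fun i hi => (hm i hi).le).and
      (eventually_add_smul_mem_polarBody (m := -m) hf.1 fun i hi => by simp [hm i hi])).and
      self_mem_nhdsWithin |>.exists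
  have hmid : f ∈ openSegment ℝ (f + t • m) (f + t • -m) :=
    ⟨1 / 2, 1 / 2, by norm_num, by norm_num, by norm_num, by module⟩
  have hadd : f + t • m = f := hf.2 hpos hneg hmid
  exact (smul_eq_zero.1 (add_eq_left.1 hadd)).resolve_left (ne_of_gt ht)

variable [FiniteDimensional ℝ E]

theorem isCompact_polarBody (h0 : 0 ∈ interior (convexHull ℝ (Set.range w))) :
    IsCompact (polarBody w) :=
  have : ProperSpace (StrongDual ℝ E) := FiniteDimensional.proper_real _
  Metric.isCompact_of_isClosed_isBounded (isClosed_polarBody w) (isBounded_polarBody h0)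

theorem exists_mem_extremePoints_polarBody_lt
    (h0 : 0 ∈ interior (convexHull ℝ (Set.range w))) {i j : ι} (hij : j ≠ i)
    (hm : ∀ k ≠ i, m (w k) < m (w i)) :
    ∃ f ∈ (polarBody w).extremePoints ℝ, f (w i) = 1 ∧ f (w j) < 1 := by
  have hle : ∀ k, m (w k) ≤ m (w i) := fun k => by
    rcases eq_or_ne k i with rfl | hk
    exacts [le_rfl, (hm k hk).le]
  have hpos : 0 < m (w i) := by
    by_contra! hi
    have hm0 : m = 0 := eq_zero_of_mem_interior h0 fun x hx =>
      (forall_mem_convexHull_range_le_iff.2 hle x hx).trans (hi.trans_eq m.map_zero.symm)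
    simpa [hm0] using hm j hij
  have hface : (m (w i))⁻¹ • m ∈ polarFace w {i} := by
    refine ⟨fun k => ?_, fun k hk => ?_⟩
    · simpa [← div_eq_inv_mul] using div_le_one_of_le₀ (hle k) hpos.le
    · simp [Set.mem_singleton_iff.1 hk, hpos.ne']
  obtain ⟨f, hf, hfS, hmin⟩ :=
    exists_mem_extremePoints_polarBody_forall_le (isCompact_polarBody h0) ⟨_, hface⟩ (w j)
  refine ⟨f, hf, hfS.2 i rfl, (hmin _ hface).trans_lt ?_⟩
  simpa [← div_eq_inv_mul] using (div_lt_one hpos).2 (hm j hij)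

theorem exists_mem_extremePoints_polarBody_sub_lt [Finite ι] (hw : ConvexIndependent ℝ w) {z : E}
    (hz : z ∈ interior (convexHull ℝ (Set.range w))) {i j : ι} (hij : j ≠ i) :
    ∃ f ∈ (polarBody fun k => w k - z).extremePoints ℝ, f (w i - z) = 1 ∧ f (w j - z) < 1 := by
  obtain ⟨m, hm⟩ := exists_forall_apply_lt hw i
  exact exists_mem_extremePoints_polarBody_lt (zero_mem_interior_convexHull_range_sub hz) hij
    fun k hk => by simpa using hm k hk

theorem span_image_tight_eq_top [Finite ι] (hf : f ∈ (polarBody w).extremePoints ℝ) :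
    Submodule.span ℝ (w '' {i | f (w i) = 1}) = ⊤ := by
  by_contra hne
  obtain ⟨m, hm, hle⟩ := Submodule.exists_le_ker_of_lt_top _ (lt_top_iff_ne_top.2 hne)
  refine hm (LinearMap.toContinuousLinearMap.map_eq_zero_iff.1
    (eq_zero_of_mem_extremePoints_polarBody hf fun i hi => ?_))
  exact hle (Submodule.subset_span ⟨i, hi, rfl⟩)

open scoped Finset in
theorem finrank_le_card_of_mem_extremePoints_polarBody [Finite ι]
    (hf : f ∈ (polarBody w).extremePoints ℝ) {T : Finset ι} (hT : ∀ i, f (w i) = 1 → i ∈ T) :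
    Module.finrank ℝ E ≤ #T := by
  classical
  have htop : Submodule.span ℝ (T.image w : Set E) = ⊤ := by
    rw [eq_top_iff, ← span_image_tight_eq_top hf, Finset.coe_image]
    exact Submodule.span_mono (Set.image_mono hT)
  calc Module.finrank ℝ E = Set.finrank ℝ (T.image w : Set E) := by
        rw [Set.finrank, htop, finrank_top]
    _ ≤ #(T.image w) := finrank_span_finset_le_card _
    _ ≤ #T := Finset.card_image_le

end PolarBody

section Transversal

variable {E : Type*} [NormedAddCommGroup E] [NormedSpace ℝ E] [FiniteDimensional ℝ E]
  {ι : Type*} [Fintype ι] {w : ι × Bool → E} {f : StrongDual ℝ E}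

theorem exists_transversal_of_mem_extremePoints_polarBody
    (hι : Fintype.card ι = Module.finrank ℝ E)
    (hw : ∀ f ∈ polarBody w, ∀ i b b', f (w (i, b)) = 1 → f (w (i, b')) = 1 → b = b')
    (hf : f ∈ (polarBody w).extremePoints ℝ) :
    ∃ ε : ι → Bool, ∀ p, f (w p) = 1 ↔ p.2 = ε p.1 := by
  classical
  let T : Finset (ι × Bool) := {p | f (w p) = 1}
  have hinj : Set.InjOn Prod.fst (T : Set (ι × Bool)) := fun p hp q hq hpq =>
    Prod.ext hpq (hw f hf.1 p.1 p.2 q.2 (by simpa [T] using hp) (by simpa [T, hpq] using hq))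
  have himage : T.image Prod.fst = Finset.univ := by
    refine Finset.eq_univ_of_card _ ((Finset.card_le_univ _).antisymm ?_)
    rw [Finset.card_image_of_injOn hinj, hι]
    exact finrank_le_card_of_mem_extremePoints_polarBody hf (by simp [T])
  have hex : ∀ i, ∃ b, f (w (i, b)) = 1 := fun i => by
    obtain ⟨⟨_, b⟩, hp, rfl⟩ := Finset.mem_image.1 (himage ▸ Finset.mem_univ i)
    exact ⟨b, by simpa [T] using hp⟩
  choose ε hε using hex
  exact ⟨ε, fun p => ⟨fun hp => hw f hf.1 p.1 p.2 _ hp (hε p.1), fun hp => by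
    rw [show p = (p.1, ε p.1) from Prod.ext rfl hp]; exact hε p.1⟩⟩

theorem exists_dual_of_transversal (hι : Fintype.card ι = Module.finrank ℝ E)
    (hf : f ∈ (polarBody w).extremePoints ℝ) {ε : ι → Bool}
    (hε : ∀ p, f (w p) = 1 ↔ p.2 = ε p.1) (j : ι) :
    ∃ m : StrongDual ℝ E, m (w (j, ε j)) = 1 ∧ ∀ i ≠ j, m (w (i, ε i)) = 0 := by
  have hrange : w '' {p | f (w p) = 1} = Set.range fun i => w (i, ε i) := by
    ext x
    constructor
    · rintro ⟨p, hp, rfl⟩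
      exact ⟨p.1, congrArg w (Prod.ext rfl ((hε p).1 hp).symm)⟩
    · rintro ⟨i, rfl⟩
      exact ⟨(i, ε i), (hε _).2 rfl, rfl⟩
  let b := basisOfTopLeSpanOfCardEqFinrank (fun i => w (i, ε i))
    (hrange ▸ span_image_tight_eq_top hf).ge hι
  have hb : ∀ i, b.coord j (w (i, ε i)) = Finsupp.single i 1 j := fun i => by
    rw [← b.repr_self, b.coord_apply, coe_basisOfTopLeSpanOfCardEqFinrank]
  exact ⟨(b.coord j).toContinuousLinearMap, by simp [hb], fun i hi => by simp [hb, hi]⟩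

theorem exists_mem_extremePoints_polarBody_update [DecidableEq ι] (hK : IsCompact (polarBody w))
    (hι : Fintype.card ι = Module.finrank ℝ E)
    (hw : ∀ f ∈ polarBody w, ∀ i b b', f (w (i, b)) = 1 → f (w (i, b')) = 1 → b = b')
    (hf : f ∈ (polarBody w).extremePoints ℝ) {ε : ι → Bool}
    (hε : ∀ p, f (w p) = 1 ↔ p.2 = ε p.1) (j : ι) :
    ∃ g ∈ (polarBody w).extremePoints ℝ,
      ∀ p, g (w p) = 1 ↔ p.2 = Function.update ε j (!ε j) p.1 := by
  obtain ⟨m, hmj, hm⟩ := exists_dual_of_transversal hι hf hε j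
  have htight : ∀ i, f (w (i, ε i)) = 1 := fun i => (hε _).2 rfl
  have hneg : ∀ p, f (w p) = 1 → (-m) (w p) ≤ 0 := fun ⟨i, b⟩ hp => by
    obtain rfl : b = ε i := (hε _).1 hp
    rcases eq_or_ne i j with rfl | hij
    · simp [hmj]
    · simp [hm i hij]
  obtain ⟨t, hmem, ht⟩ :=
    (eventually_add_smul_mem_polarBody hf.1 hneg).and self_mem_nhdsWithin |>.exists
  have hface : f + t • -m ∈ polarFace w {p | p.1 ≠ j ∧ p.2 = ε p.1} :=
    ⟨hmem, fun p ⟨hpj, hp⟩ => by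
      rw [show p = (p.1, ε p.1) from Prod.ext rfl hp]
      simp [htight, hm _ hpj]⟩
  obtain ⟨g, hg, hgS, hgmin⟩ := exists_mem_extremePoints_polarBody_forall_le hK ⟨_, hface⟩
    (w (j, ε j))
  have hgj : g (w (j, ε j)) < 1 := by
    have hle : g (w (j, ε j)) ≤ 1 - t := by simpa [htight, hmj, sub_eq_add_neg] using hgmin _ hface
    have : 0 < t := ht
    linarith
  obtain ⟨ε', hε'⟩ := exists_transversal_of_mem_extremePoints_polarBody hι hw hg
  have hεj : (!ε j) = ε' j := (Bool.eq_not_of_ne fun h => hgj.ne ((hε' _).2 h.symm)).symm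
  have hεi : ∀ i ≠ j, ε' i = ε i := fun i hij => ((hε' _).1 (hgS.2 (i, ε i) ⟨hij, rfl⟩)).symm
  rw [Function.update_eq_iff.2 ⟨hεj, fun i hij => (hεi i hij).symm⟩]
  exact ⟨g, hg, hε'⟩

-- Flipping one coordinate at a time leads from any extreme point to every transversal.
theorem exists_mem_polarBody_transversal (hK : IsCompact (polarBody w))
    (hι : Fintype.card ι = Module.finrank ℝ E)
    (hw : ∀ f ∈ polarBody w, ∀ i b b', f (w (i, b)) = 1 → f (w (i, b')) = 1 → b = b')
    (ε : ι → Bool) : ∃ f ∈ polarBody w, ∀ p, f (w p) = 1 ↔ p.2 = ε p.1 := by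
  classical
  have key : ∀ T : Finset ι, ∃ η : ι → Bool, (∀ i ∈ T, η i = ε i) ∧
      ∃ f ∈ (polarBody w).extremePoints ℝ, ∀ p, f (w p) = 1 ↔ p.2 = η p.1 := by
    intro T
    induction T using Finset.induction_on with
    | empty =>
      obtain ⟨f, hf⟩ := hK.extremePoints_nonempty ⟨0, fun _ => zero_le_one⟩
      obtain ⟨η, hη⟩ := exists_transversal_of_mem_extremePoints_polarBody hι hw hf
      exact ⟨η, by simp, f, hf, hη⟩
    | insert j T hj ih =>
      obtain ⟨η, hηT, f, hf, hη⟩ := ih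
      rcases eq_or_ne (η j) (ε j) with hηj | hηj
      · exact ⟨η, Finset.forall_mem_insert .. |>.2 ⟨hηj, hηT⟩, f, hf, hη⟩
      · refine ⟨Function.update η j (!η j), Finset.forall_mem_insert .. |>.2 ⟨?_, fun i hi => ?_⟩,
          exists_mem_extremePoints_polarBody_update hK hι hw hf hη j⟩
        · rw [Function.update_self, Bool.eq_not_of_ne hηj.symm]
        · rw [Function.update_of_ne (ne_of_mem_of_not_mem hi hj), hηT i hi]
  obtain ⟨η, hη, f, hf, hfη⟩ := key Finset.univ
  obtain rfl : η = ε := funext fun i => hη i (Finset.mem_univ i)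
  exact ⟨f, hf.1, hfη⟩

end Transversal

section CrossFamily

variable {d : ℕ} {ι : Type*} {u v : ι × Bool → Euc d} {S : Set (ι × Bool)}

theorem isFaceVertexSet_iff {P S : Set (Euc d)} :
    IsFaceVertexSet P S ↔
      S = ∅ ∨ ∃ l : StrongDual ℝ (Euc d), S = {x ∈ verts P | ∀ y ∈ P, l y ≤ l x} := by
  have hinter : ∀ l : StrongDual ℝ (Euc d),
      verts P ∩ {x ∈ P | ∀ y ∈ P, l y ≤ l x} = {x ∈ verts P | ∀ y ∈ P, l y ≤ l x} := fun l => by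
    ext x
    exact ⟨fun h => ⟨h.1, h.2.2⟩, fun h => ⟨h.1, h.1.1, h.2⟩⟩
  constructor
  · rintro ⟨F, hF, rfl⟩
    rcases F.eq_empty_or_nonempty with rfl | hne
    · exact .inl (Set.inter_empty _)
    · obtain ⟨l, rfl⟩ := hF hne
      exact .inr ⟨l, hinter l⟩
  · rintro (rfl | ⟨l, rfl⟩)
    · exact ⟨∅, isExposed_empty, (Set.inter_empty _).symm⟩
    · exact ⟨_, fun _ => ⟨l, rfl⟩, (hinter l).symm⟩

/-- A family of points, indexed by `d` antipodal pairs, with the linear inequalities satisfied by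
the vertices of a crosspolytope: no nonzero functional is maximal at both points of a pair, and
every choice of one point from each pair is the set of maximisers of some functional. -/
structure IsCrossFamily (u : ι × Bool → Euc d) : Prop where
  eq_zero : ∀ (l : StrongDual ℝ (Euc d)) i, (∀ p, l (u p) ≤ l (u (i, true))) →
    (∀ p, l (u p) ≤ l (u (i, false))) → l = 0
  exists_transversal : ∀ ε : ι → Bool, ∃ (l : StrongDual ℝ (Euc d)) (a : ℝ),
    ∀ p, l (u p) ≤ a ∧ (l (u p) = a ↔ p.2 = ε p.1)

namespace IsCrossFamily

theorem exists_le_and_eq_iff_mem (hu : IsCrossFamily u)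
    (hS : ∀ i, ¬((i, true) ∈ S ∧ (i, false) ∈ S)) :
    ∃ (l : StrongDual ℝ (Euc d)) (a : ℝ), ∀ p, l (u p) ≤ a ∧ (l (u p) = a ↔ p ∈ S) := by
  classical
  -- A set without antipodal pairs is the intersection of two transversals.
  obtain ⟨l₁, a₁, h₁⟩ := hu.exists_transversal fun i => decide ((i, true) ∈ S)
  obtain ⟨l₂, a₂, h₂⟩ := hu.exists_transversal fun i => decide ((i, false) ∉ S)
  refine ⟨l₁ + l₂, a₁ + a₂, fun p => ⟨add_le_add (h₁ p).1 (h₂ p).1, ?_⟩⟩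
  rw [add_apply, add_eq_add_iff_eq_and_eq (h₁ p).1 (h₂ p).1, (h₁ p).2, (h₂ p).2]
  obtain ⟨i, _ | _⟩ := p <;> grind

theorem exists_le_and_eq_iff_eq (hu : IsCrossFamily u) (p : ι × Bool) :
    ∃ (l : StrongDual ℝ (Euc d)) (a : ℝ), ∀ q, l (u q) ≤ a ∧ (l (u q) = a ↔ q = p) :=
  hu.exists_le_and_eq_iff_mem (S := {p}) (by grind)

theorem injective (hu : IsCrossFamily u) : Function.Injective u := fun p q hpq => by
  obtain ⟨l, a, hl⟩ := hu.exists_le_and_eq_iff_eq q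
  exact (hl p).2.1 (hpq ▸ (hl q).2.2 rfl)

variable [Finite ι]

theorem mem_verts_convexHull (hu : IsCrossFamily u) (p : ι × Bool) :
    u p ∈ verts (convexHull ℝ (Set.range u)) := by
  obtain ⟨l, a, hl⟩ := hu.exists_le_and_eq_iff_eq p
  have hexposed : IsExposed ℝ (convexHull ℝ (Set.range u)) (l.toExposed _) :=
    ContinuousLinearMap.toExposed.isExposed
  have hp : u p ∈ l.toExposed (convexHull ℝ (Set.range u)) :=
    ⟨subset_convexHull ℝ _ ⟨p, rfl⟩,
      forall_mem_convexHull_range_le_iff.2 fun q => (hl q).1.trans_eq ((hl p).2.2 rfl).symm⟩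
  have hcompact := hexposed.isCompact ((Set.finite_range u).isCompact_convexHull ℝ)
  obtain ⟨x, hx⟩ := hcompact.extremePoints_nonempty ⟨u p, hp⟩
  have hxP := hexposed.isExtreme.extremePoints_subset_extremePoints hx
  obtain ⟨q, rfl⟩ := extremePoints_convexHull_subset hxP
  have hq : l (u q) = a := (hl q).1.antisymm ((hl p).2.2 rfl ▸ hx.1.2 _ hp.1)
  exact (hl q).2.1 hq ▸ hxP

theorem verts_convexHull (hu : IsCrossFamily u) :
    verts (convexHull ℝ (Set.range u)) = Set.range u :=
  extremePoints_convexHull_subset.antisymm (Set.range_subset_iff.2 hu.mem_verts_convexHull)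

theorem isFaceVertexSet_image_iff (hu : IsCrossFamily u) :
    IsFaceVertexSet (convexHull ℝ (Set.range u)) (u '' S) ↔
      S = Set.univ ∨ ∀ i, ¬((i, true) ∈ S ∧ (i, false) ∈ S) := by
  have hmax : ∀ l : StrongDual ℝ (Euc d), u '' S = {x ∈ verts (convexHull ℝ (Set.range u)) |
      ∀ y ∈ convexHull ℝ (Set.range u), l y ≤ l x} ↔ ∀ p, p ∈ S ↔ ∀ q, l (u q) ≤ l (u p) := by
    intro l
    simp only [hu.verts_convexHull, forall_mem_convexHull_range_le_iff]
    have hrange : {x ∈ Set.range u | ∀ q, l (u q) ≤ l x} = u '' {p | ∀ q, l (u q) ≤ l (u p)} :=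
      Set.image_preimage_eq_range_inter.symm
    rw [hrange, hu.injective.image_injective.eq_iff, Set.ext_iff]
    rfl
  simp only [isFaceVertexSet_iff, Set.image_eq_empty, hmax]
  constructor
  · rintro (rfl | ⟨l, hl⟩)
    · simp
    · rcases eq_or_ne l 0 with rfl | hl0
      · exact .inl (Set.eq_univ_of_forall fun p => (hl p).2 (by simp))
      · exact .inr fun i h => hl0 (hu.eq_zero l i ((hl _).1 h.1) ((hl _).1 h.2))
  · rintro (rfl | hS)
    · exact .inr ⟨0, by simp⟩
    · rcases S.eq_empty_or_nonempty with rfl | ⟨p₀, hp₀⟩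
      · exact .inl rfl
      obtain ⟨l, a, hl⟩ := hu.exists_le_and_eq_iff_mem hS
      refine .inr ⟨l, fun p => ?_⟩
      rw [← (hl p).2]
      exact ⟨fun hp q => hp ▸ (hl q).1, fun hp => (hl p).1.antisymm ((hl p₀).2.2 hp₀ ▸ hp p₀)⟩

theorem combEquiv (hu : IsCrossFamily u) (hv : IsCrossFamily v) :
    CombEquiv (convexHull ℝ (Set.range u)) (convexHull ℝ (Set.range v)) := by
  let f : Euc d → Euc d := Function.extend u v 0
  have hf : ∀ p, f (u p) = v p := hu.injective.extend_apply v 0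
  have himage : ∀ S : Set (ι × Bool), f '' (u '' S) = v '' S := fun S => by
    rw [Set.image_image]; simp [hf]
  refine ⟨f, ?_, fun S hS => ?_⟩
  · rw [hu.verts_convexHull, hv.verts_convexHull]
    refine ⟨?_, ?_, ?_⟩
    · rintro _ ⟨p, rfl⟩
      exact ⟨p, (hf p).symm⟩
    · rintro _ ⟨p, rfl⟩ _ ⟨q, rfl⟩ hpq
      exact congrArg u (hv.injective (by simpa [hf] using hpq))
    · rintro _ ⟨p, rfl⟩
      exact ⟨u p, ⟨p, rfl⟩, hf p⟩
  · obtain ⟨T, rfl⟩ := Set.subset_range_iff_exists_image_eq.1 (hu.verts_convexHull ▸ hS)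
    rw [himage, hu.isFaceVertexSet_image_iff, hv.isFaceVertexSet_image_iff]

end IsCrossFamily

/-- The vertices `eᵢ = crossVertex d (i, true)` and `-eᵢ = crossVertex d (i, false)` of the
crosspolytope. -/
def crossVertex (d : ℕ) (p : Fin d × Bool) : Euc d :=
  if p.2 then EuclideanSpace.single p.1 1 else -EuclideanSpace.single p.1 1

theorem crossPolytope_eq_convexHull_range (d : ℕ) :
    crossPolytope d = convexHull ℝ (Set.range (crossVertex d)) := by
  refine congrArg (convexHull ℝ) (Set.ext fun x => ?_)
  simp [crossVertex, or_comm, @eq_comm _ x]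

theorem isCrossFamily_crossVertex (d : ℕ) : IsCrossFamily (crossVertex d) where
  eq_zero l i htrue hfalse := by
    simp only [crossVertex, Prod.forall, Bool.forall_bool, map_neg, if_true, Bool.false_eq_true,
      if_false] at htrue hfalse
    refine ContinuousLinearMap.coe_injective ((EuclideanSpace.basisFun _ ℝ).toBasis.ext fun j => ?_)
    suffices l (EuclideanSpace.single j 1) = 0 by simpa
    linarith [(htrue j).1, (htrue j).2, (htrue i).1, (hfalse i).2]
  exists_transversal ε := by
    refine ⟨innerSL ℝ (WithLp.toLp 2 fun i => if ε i then (1 : ℝ) else -1), 1, fun ⟨j, b⟩ => ?_⟩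
    cases b <;> cases hε : ε j <;>
      norm_num [crossVertex, inner_neg_right, EuclideanSpace.inner_single_right, hε]

end CrossFamily

section InnerDiagonals

variable {d : ℕ} {P : Set (Euc d)} {u v : Euc d}

theorem IsPolytope.finite_verts (hP : IsPolytope P) : (verts P).Finite := by
  obtain ⟨V, hV, rfl⟩ := hP
  exact hV.subset extremePoints_convexHull_subset

theorem IsPolytope.convexHull_verts (hP : IsPolytope P) : convexHull ℝ (verts P) = P := by
  have hclosed := hP.finite_verts.isClosed_convexHull ℝ
  obtain ⟨V, hV, rfl⟩ := hP
  rw [← hclosed.closure_eq]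
  exact closure_convexHull_extremePoints (hV.isCompact_convexHull ℝ) (convex_convexHull ℝ V)

theorem IsPolytope.convex (hP : IsPolytope P) : Convex ℝ P :=
  hP.convexHull_verts ▸ convex_convexHull ℝ _

theorem IsDPolytope.interior_nonempty (hP : IsDPolytope P) : (interior P).Nonempty :=
  hP.1.convex.interior_nonempty_iff_affineSpan_eq_top.2 hP.2

namespace InnerDiagonal

theorem symm (h : InnerDiagonal P u v) : InnerDiagonal P v u :=
  ⟨h.2.1, h.1, h.2.2.1.symm, openSegment_symm ℝ u v ▸ h.2.2.2⟩

theorem eq_zero (h : InnerDiagonal P u v) {l : StrongDual ℝ (Euc d)}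
    (hu : ∀ y ∈ P, l y ≤ l u) (hv : ∀ y ∈ P, l y ≤ l v) : l = 0 := by
  obtain ⟨x, ⟨a, b, -, -, hab, rfl⟩, hx⟩ := h.2.2.2
  refine eq_zero_of_mem_interior hx fun y hy => ?_
  have huv : l v = l u := (hu v h.2.1.1).antisymm (hv u h.1.1)
  simpa [huv, ← add_mul, hab] using hu y hy

theorem eq_zero_of_convexHull_range {ι : Type*} {w : ι → Euc d} {i j : ι}
    (h : InnerDiagonal (convexHull ℝ (Set.range w)) (w i) (w j)) {l : StrongDual ℝ (Euc d)}
    (hi : ∀ k, l (w k) ≤ l (w i)) (hj : ∀ k, l (w k) ≤ l (w j)) : l = 0 :=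
  h.eq_zero (forall_mem_convexHull_range_le_iff.2 hi) (forall_mem_convexHull_range_le_iff.2 hj)

theorem apply_sub_ne_one {ι : Type*} {w : ι → Euc d} {i j : ι}
    (h : InnerDiagonal (convexHull ℝ (Set.range w)) (w i) (w j)) {z : Euc d}
    {f : StrongDual ℝ (Euc d)} (hf : f ∈ polarBody fun k => w k - z) (hi : f (w i - z) = 1) :
    f (w j - z) ≠ 1 := by
  intro hj
  simp only [polarBody, Set.mem_ofPred_eq, map_sub] at hf hi hj
  have := h.eq_zero_of_convexHull_range (l := f) (fun k => by linarith [hf k])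
    (fun k => by linarith [hf k])
  simp [this] at hi

end InnerDiagonal

theorem isCrossFamily_of_innerDiagonal {u : Fin d × Bool → Euc d}
    (hint : (interior (convexHull ℝ (Set.range u))).Nonempty)
    (hu : ∀ i, InnerDiagonal (convexHull ℝ (Set.range u)) (u (i, true)) (u (i, false))) :
    IsCrossFamily u where
  eq_zero _ i := (hu i).eq_zero_of_convexHull_range
  exists_transversal ε := by
    obtain ⟨z, hz⟩ := hint
    have hanti : ∀ f ∈ polarBody fun p => u p - z, ∀ i b b',
        f (u (i, b) - z) = 1 → f (u (i, b') - z) = 1 → b = b' := by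
      rintro f hf i (_ | _) (_ | _) hb hb'
      · rfl
      · exact ((hu i).apply_sub_ne_one hf hb' hb).elim
      · exact ((hu i).apply_sub_ne_one hf hb hb').elim
      · rfl
    obtain ⟨f, hf, hfε⟩ := exists_mem_polarBody_transversal
      (isCompact_polarBody (zero_mem_interior_convexHull_range_sub hz)) (by simp) hanti ε
    refine ⟨f, 1 + f z, fun p => ⟨?_, ?_⟩⟩
    · simpa using hf p
    · rw [← hfε p, map_sub, sub_eq_iff_eq_add]

/-- The graph of inner diagonals on the vertices of `P`. -/
def diagonalGraph (P : Set (Euc d)) : SimpleGraph (verts P) where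
  Adj u v := InnerDiagonal P u v
  symm := ⟨fun _ _ h => h.symm⟩
  loopless := ⟨fun _ h => h.2.2.1 rfl⟩

theorem exists_equiv_innerDiagonal (hd : d ≤ 5) (hP : IsDPolytope P) (hill : Illuminated P)
    (hcard : (verts P).ncard ≤ 2 * d) :
    ∃ e : Fin d × Bool ≃ verts P, ∀ i, InnerDiagonal P (e (i, true)) (e (i, false)) := by
  classical
  have hrange : convexHull ℝ (Set.range ((↑) : verts P → Euc d)) = P := by
    rw [Subtype.range_coe, hP.1.convexHull_verts]
  obtain ⟨z, hz⟩ := hP.interior_nonempty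
  have : Fintype (verts P) := hP.1.finite_verts.fintype
  have : Nonempty (verts P) := by
    rw [← Set.range_nonempty_iff_nonempty (f := ((↑) : verts P → Euc d)),
      ← convexHull_nonempty_iff (𝕜 := ℝ), hrange]
    exact ⟨z, interior_subset hz⟩
  let facets : Set (Finset (verts P)) := {F | ∃ f ∈ (polarBody fun v : verts P =>
    (v : Euc d) - z).extremePoints ℝ, ∀ v : verts P, v ∈ F ↔ f (v - z) = 1}
  have hadj : ∀ v, ∃ u, (diagonalGraph P).Adj v u := fun v =>
    let ⟨u, hu⟩ := hill v v.2
    ⟨⟨u, hu.1⟩, hu.symm⟩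
  refine exists_equiv_fin_prod_bool (𝓕 := facets) hadj ?_ ?_ ?_ hd ?_
  · rintro F ⟨f, hf, hF⟩
    simpa using finrank_le_card_of_mem_extremePoints_polarBody hf fun v hv => (hF v).2 hv
  · intro i j hij
    have hindep : ConvexIndependent ℝ ((↑) : verts P → Euc d) :=
      hP.1.convex.convexIndependent_extremePoints
    obtain ⟨f, hf, hfi, hfj⟩ :=
      exists_mem_extremePoints_polarBody_sub_lt hindep (hrange.symm ▸ hz) hij.symm
    exact ⟨({v : verts P | f (v - z) = 1} : Finset (verts P)), ⟨f, hf, by simp⟩,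
      by simpa using hfi, by simpa using hfj.ne⟩
  · rintro F ⟨f, hf, hF⟩ i hi j hj - hij
    exact InnerDiagonal.apply_sub_ne_one (w := ((↑) : verts P → Euc d)) (hrange.symm ▸ hij)
      hf.1 ((hF i).1 hi) ((hF j).1 hj)
  · rwa [← Set.toFinset_card, ← Set.ncard_eq_toFinset_card']

end InnerDiagonals

theorem mani_lowDim_crossPolytope_general {d : ℕ} (hd : d ≤ 5) {P : Set (Euc d)}
    (hP : IsDPolytope P) (hill : Illuminated P) (hcard : (verts P).ncard ≤ 2 * d) :
    CombEquiv P (crossPolytope d) := by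
  obtain ⟨e, he⟩ := exists_equiv_innerDiagonal hd hP hill hcard
  obtain ⟨u, hrange, hu⟩ : ∃ u : Fin d × Bool → Euc d,
      Set.range u = verts P ∧ ∀ i, InnerDiagonal P (u (i, true)) (u (i, false)) :=
    ⟨fun p => e p, (e.surjective.range_comp Subtype.val).trans Subtype.range_coe, he⟩
  obtain rfl : convexHull ℝ (Set.range u) = P := by rw [hrange, hP.1.convexHull_verts]
  rw [crossPolytope_eq_convexHull_range]
  exact (isCrossFamily_of_innerDiagonal hP.interior_nonempty hu).combEquiv
    (isCrossFamily_crossVertex d)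

/-- For `1 ≤ d ≤ 5`, every Mani `d`-polytope is combinatorially
equivalent to the `d`-dimensional crosspolytope; in particular there is exactly one
combinatorial type of Mani `d`-polytope in these dimensions. -/
theorem mani_lowDim_crossPolytope {d : ℕ} (hd1 : 1 ≤ d) (hd5 : d ≤ 5)
    (P : Set (Euc d)) (hP : IsManiPolytope P) :
    CombEquiv P (crossPolytope d) :=
  mani_lowDim_crossPolytope_general hd5 hP.1 hP.2.1 (hP.2.2.trans_le (min_le_left _ _))
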